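/- Let w : {1,…,n} → ℝ with w(j) > 0 for all j be a welfare basis function and f : {1,…,n} → ℝ with f(1) > 0; set f(0) = w(0) = f(n+1) = w(n+1) = 0. Then PoA(f,w,n) = 1/W*, where W* is the minimum of μ over all pairs (λ, μ) with λ ≥ 0 and μ ∈ ℝ satisfying w(b+x) − μ·w(a+x) + λ·[a·f(a+x) − b·f(a+x+1)] ≤ 0 for all (a,x,b) ∈ I_R; moreover this minimum is attained and finite. -/

import Mathlib

/-!
The argument is linear programming duality with two dual variables.

*Reduction to `I_R`.* For fixed `A = a + x` and `B = b + x` the dual constraint is affine in `x`, and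
the extreme admissible values of `x` give triples in `I_R`; so the constraints on `I_R` imply those
on all of `I` (`dualConstr_of_reduced`).

*Lower bound on the PoA.* For an equilibrium `a` and any allocation `o`, each resource has a triple
(used only in `a`, used in both, used only in `o`). Summing the equilibrium inequalities for the
deviations `a_i → o_i` over the agents, and the dual constraints over the resources, gives
`W(o) ≤ μ W(a)` (`welfare_le_of_dual`). Equilibria exist because the game has an exact potential
(`exists_isNash`), so the worst equilibrium is a genuine minimum.

*Upper bound on the PoA.* If `μ` is not dual feasible, one-dimensional Helly in the variable `λ`
produces a violated combination of at most two constraints (`exists_two_violated`). These weights are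
realised by a cyclic game (`cyclicGame`) having an equilibrium whose welfare is less than `1/μ` times
that of another allocation.

*Attainment.* The constraints at `(0,0,b)` and `(1,0,0)` confine `λ`, so sublevel sets of the
dual program are compact (`exists_dual_min`).
-/

/-- A resource allocation game with at most `n` agents: a finite resource set `R`,
a nonnegative value `v r` for each resource, `m ≤ n` agents, and for each agent a
nonempty finite collection of admissible choices (subsets of `R`). -/
structure RAGame (n : ℕ) where
  R : Type
  [fintypeR : Fintype R]
  [decEqR : DecidableEq R]
  v : R → ℝ
  v_nonneg : ∀ r, 0 ≤ v r
  m : ℕ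
  m_le : m ≤ n
  A : Fin m → Finset (Finset R)
  A_ne : ∀ i, (A i).Nonempty

attribute [instance] RAGame.fintypeR RAGame.decEqR

namespace RAGame

variable {n : ℕ}

/-- An allocation: each agent selects an admissible choice. -/
def Alloc (G : RAGame n) : Type := (i : Fin G.m) → {s : Finset G.R // s ∈ G.A i}

/-- `|a|_r`: the number of agents selecting resource `r` in allocation `a`. -/
def count (G : RAGame n) (a : G.Alloc) (r : G.R) : ℕ :=
  (Finset.univ.filter fun i => r ∈ (a i).val).card

/-- The welfare `W(a) = Σ_{r covered} v_r · w(|a|_r)`. -/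
def welfare (G : RAGame n) (w : ℕ → ℝ) (a : G.Alloc) : ℝ :=
  ∑ r ∈ Finset.univ.filter (fun r => 0 < G.count a r), G.v r * w (G.count a r)

/-- Agent `i`'s utility `U_i(a) = Σ_{r ∈ a_i} v_r · f(|a|_r)`. -/
def utility (G : RAGame n) (f : ℕ → ℝ) (a : G.Alloc) (i : Fin G.m) : ℝ :=
  ∑ r ∈ (a i).val, G.v r * f (G.count a r)

/-- Pure Nash equilibrium: no unilateral deviation improves an agent's utility. -/
def IsNash (G : RAGame n) (f : ℕ → ℝ) (a : G.Alloc) : Prop :=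
  ∀ (i : Fin G.m) (s : {s : Finset G.R // s ∈ G.A i}),
    G.utility f (Function.update a i s) i ≤ G.utility f a i

/-- The optimal welfare `max_{a ∈ A} W(a)`. -/
noncomputable def optVal (G : RAGame n) (w : ℕ → ℝ) : ℝ :=
  sSup { x : ℝ | ∃ a : G.Alloc, x = G.welfare w a }

/-- The worst equilibrium welfare `min_{a ∈ NE(G)} W(a)`. -/
noncomputable def worstNash (G : RAGame n) (f w : ℕ → ℝ) : ℝ :=
  sInf { x : ℝ | ∃ a : G.Alloc, G.IsNash f a ∧ x = G.welfare w a }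

end RAGame

/-- The price of anarchy `PoA(f,w,n)` over the class `G_{f,w}^n` of games with at
most `n` agents and strictly positive optimal welfare. -/
noncomputable def PoA (f w : ℕ → ℝ) (n : ℕ) : ℝ :=
  sInf { x : ℝ | ∃ G : RAGame n, 0 < G.optVal w ∧ x = G.worstNash f w / G.optVal w }

/-- The index set `I = {(a,x,b) ∈ ℕ³ : 1 ≤ a+x+b ≤ n}`. -/
def indexSet (n : ℕ) : Finset (ℕ × ℕ × ℕ) :=
  ((Finset.range (n+1)) ×ˢ (Finset.range (n+1)) ×ˢ (Finset.range (n+1))).filter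
    (fun p => 1 ≤ p.1 + p.2.1 + p.2.2 ∧ p.1 + p.2.1 + p.2.2 ≤ n)

/-- The reduced index set `I_R = {(a,x,b) ∈ I : a·x·b = 0 or a+x+b = n}`. -/
def indexSetR (n : ℕ) : Finset (ℕ × ℕ × ℕ) :=
  (indexSet n).filter (fun p => p.1 * p.2.1 * p.2.2 = 0 ∨ p.1 + p.2.1 + p.2.2 = n)

/-- Feasibility for the primal linear program (6):
`θ ≥ 0`, `Σ [a f(a+x) − b f(a+x+1)] θ(a,x,b) ≥ 0`, `Σ w(a+x) θ(a,x,b) = 1`. -/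
def PrimalFeasible (f w : ℕ → ℝ) (n : ℕ) (θ : ℕ × ℕ × ℕ → ℝ) : Prop :=
  (∀ p ∈ indexSet n, 0 ≤ θ p) ∧
  0 ≤ ∑ p ∈ indexSet n,
      ((p.1 : ℝ) * f (p.1 + p.2.1) - (p.2.2 : ℝ) * f (p.1 + p.2.1 + 1)) * θ p ∧
  ∑ p ∈ indexSet n, w (p.1 + p.2.1) * θ p = 1

/-- Objective of the primal linear program: `Σ w(b+x) θ(a,x,b)`. -/
def primalObj (w : ℕ → ℝ) (n : ℕ) (θ : ℕ × ℕ × ℕ → ℝ) : ℝ :=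
  ∑ p ∈ indexSet n, w (p.2.2 + p.2.1) * θ p

/-- The dual constraint at index `(a,x,b)`:
`w(b+x) − μ w(a+x) + λ [a f(a+x) − b f(a+x+1)] ≤ 0`. -/
def DualConstr (f w : ℕ → ℝ) (lam mu : ℝ) (p : ℕ × ℕ × ℕ) : Prop :=
  w (p.2.2 + p.2.1) - mu * w (p.1 + p.2.1) +
      lam * ((p.1 : ℝ) * f (p.1 + p.2.1) - (p.2.2 : ℝ) * f (p.1 + p.2.1 + 1)) ≤ 0

open Finset

namespace RAGame

variable {n : ℕ}

/-! ### Counting, potential and existence of equilibria -/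

/-- The number of agents other than `i` selecting resource `r`. -/
def others (G : RAGame n) (a : G.Alloc) (i : Fin G.m) (r : G.R) : ℕ :=
  (univ.filter fun j => j ≠ i ∧ r ∈ (a j).val).card

lemma count_eq_others (G : RAGame n) (a : G.Alloc) (i : Fin G.m) (r : G.R) :
    G.count a r = G.others a i r + if r ∈ (a i).val then 1 else 0 := by
  classical
  unfold count others
  rw [Finset.card_filter, Finset.card_filter,
    ← Finset.add_sum_erase univ (fun j => if r ∈ (a j).val then 1 else 0) (mem_univ i),
    ← Finset.add_sum_erase univ
      (fun j => if j ≠ i ∧ r ∈ (a j).val then 1 else 0) (mem_univ i)]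
  simp only [ne_eq, not_true_eq_false, false_and, if_false, zero_add]
  rw [add_comm]
  congr 1
  refine Finset.sum_congr rfl fun j hj => ?_
  simp [Finset.ne_of_mem_erase hj]

/-- The allocation `a` with agent `i` deviating to `s`; `Function.update` typed as an allocation. -/
def deviate (G : RAGame n) (a : G.Alloc) (i : Fin G.m) (s : {s : Finset G.R // s ∈ G.A i}) :
    G.Alloc :=
  Function.update a i s

lemma deviate_same (G : RAGame n) (a : G.Alloc) (i : Fin G.m)
    (s : {s : Finset G.R // s ∈ G.A i}) : G.deviate a i s i = s :=
  Function.update_self (β := fun i => {s : Finset G.R // s ∈ G.A i}) i s a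

lemma deviate_of_ne (G : RAGame n) (a : G.Alloc) {i j : Fin G.m} (hj : j ≠ i)
    (s : {s : Finset G.R // s ∈ G.A i}) : G.deviate a i s j = a j :=
  Function.update_of_ne (β := fun i => {s : Finset G.R // s ∈ G.A i}) hj s a

lemma deviate_self (G : RAGame n) (a : G.Alloc) (i : Fin G.m) : G.deviate a i (a i) = a :=
  Function.update_eq_self (β := fun i => {s : Finset G.R // s ∈ G.A i}) i a

lemma isNash_iff (G : RAGame n) (f : ℕ → ℝ) (a : G.Alloc) :
    G.IsNash f a ↔ ∀ i s, G.utility f (G.deviate a i s) i ≤ G.utility f a i :=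
  Iff.rfl

lemma others_deviate (G : RAGame n) (a : G.Alloc) (i : Fin G.m)
    (s : {s : Finset G.R // s ∈ G.A i}) (r : G.R) :
    G.others (G.deviate a i s) i r = G.others a i r := by
  unfold others
  congr 1
  refine Finset.filter_congr fun j _ => ?_
  refine and_congr_right fun hj => ?_
  rw [deviate_of_ne _ _ hj]

lemma count_le (G : RAGame n) (a : G.Alloc) (r : G.R) : G.count a r ≤ n := by
  refine le_trans (Finset.card_le_univ _) ?_
  simpa using G.m_le

lemma welfare_eq (G : RAGame n) {w : ℕ → ℝ} (hw0 : w 0 = 0) (a : G.Alloc) :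
    G.welfare w a = ∑ r, G.v r * w (G.count a r) := by
  unfold welfare
  refine Finset.sum_filter_of_ne fun r _ h => ?_
  rcases Nat.eq_zero_or_pos (G.count a r) with h0 | h0
  · exact absurd (by rw [h0, hw0, mul_zero]) h
  · exact h0

lemma welfare_nonneg (G : RAGame n) {w : ℕ → ℝ} (hw : ∀ j, 1 ≤ j → j ≤ n → 0 < w j)
    (a : G.Alloc) : 0 ≤ G.welfare w a := by
  refine Finset.sum_nonneg fun r hr => mul_nonneg (G.v_nonneg r) (hw _ ?_ (G.count_le a r)).le
  exact (Finset.mem_filter.1 hr).2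

lemma utility_eq (G : RAGame n) (f : ℕ → ℝ) (a : G.Alloc) (i : Fin G.m) :
    G.utility f a i = ∑ r, if r ∈ (a i).val then G.v r * f (G.others a i r + 1) else 0 := by
  unfold utility
  rw [← Finset.sum_filter]
  refine Finset.sum_congr (by ext; simp) fun r hr => ?_
  simp only [Finset.mem_filter] at hr
  rw [G.count_eq_others a i r, if_pos hr.2]

lemma utility_deviate (G : RAGame n) (f : ℕ → ℝ) (a : G.Alloc) (i : Fin G.m)
    (s : {s : Finset G.R // s ∈ G.A i}) :
    G.utility f (G.deviate a i s) i =
      ∑ r, if r ∈ s.val then G.v r * f (G.others a i r + 1) else 0 := by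
  rw [utility_eq]
  refine Finset.sum_congr rfl fun r _ => ?_
  rw [others_deviate, deviate_same]

/-- Rosenthal's exact potential `Σ_r v_r Σ_{j=1}^{|a|_r} f(j)`. -/
def potential (G : RAGame n) (f : ℕ → ℝ) (a : G.Alloc) : ℝ :=
  ∑ r, G.v r * ∑ j ∈ range (G.count a r), f (j + 1)

lemma potential_eq (G : RAGame n) (f : ℕ → ℝ) (a : G.Alloc) (i : Fin G.m) :
    G.potential f a = G.utility f a i +
      ∑ r, G.v r * ∑ j ∈ range (G.others a i r), f (j + 1) := by
  rw [utility_eq, potential, ← Finset.sum_add_distrib]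
  refine Finset.sum_congr rfl fun r _ => ?_
  rw [G.count_eq_others a i r]
  split_ifs
  · rw [Finset.sum_range_succ]; ring
  · simp

instance (G : RAGame n) : Finite G.Alloc := by
  unfold Alloc; infer_instance

instance (G : RAGame n) : Nonempty G.Alloc :=
  ⟨fun i => ⟨(G.A_ne i).choose, (G.A_ne i).choose_spec⟩⟩

/-- A maximiser of the potential is an equilibrium. -/
lemma exists_isNash (G : RAGame n) (f : ℕ → ℝ) : ∃ a, G.IsNash f a := by
  obtain ⟨a, ha⟩ := Finite.exists_max (G.potential f)
  refine ⟨a, (G.isNash_iff f a).2 fun i s => ?_⟩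
  have h := ha (G.deviate a i s)
  rw [G.potential_eq f a i, G.potential_eq f _ i] at h
  simp only [others_deviate] at h
  linarith

lemma finite_welfare (G : RAGame n) (w : ℕ → ℝ) (P : G.Alloc → Prop) :
    {x : ℝ | ∃ a : G.Alloc, P a ∧ x = G.welfare w a}.Finite := by
  refine (Set.finite_range (G.welfare w)).subset ?_
  rintro x ⟨a, -, rfl⟩
  exact ⟨a, rfl⟩

lemma welfare_le_optVal (G : RAGame n) (w : ℕ → ℝ) (a : G.Alloc) :
    G.welfare w a ≤ G.optVal w := by
  refine le_csSup ?_ ⟨a, rfl⟩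
  simpa using (G.finite_welfare w fun _ => True).bddAbove

lemma exists_optVal (G : RAGame n) (w : ℕ → ℝ) : ∃ a, G.optVal w = G.welfare w a := by
  have h := (Set.Nonempty.csSup_mem (s := {x : ℝ | ∃ a : G.Alloc, x = G.welfare w a})
    ⟨_, Classical.arbitrary G.Alloc, rfl⟩ (by simpa using G.finite_welfare w fun _ => True))
  exact h

lemma worstNash_le (G : RAGame n) (f w : ℕ → ℝ) (a : G.Alloc) (ha : G.IsNash f a) :
    G.worstNash f w ≤ G.welfare w a :=
  csInf_le (G.finite_welfare w _).bddBelow ⟨a, ha, rfl⟩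

lemma exists_worstNash (G : RAGame n) (f w : ℕ → ℝ) :
    ∃ a, G.IsNash f a ∧ G.worstNash f w = G.welfare w a := by
  obtain ⟨a, ha⟩ := G.exists_isNash f
  exact Set.Nonempty.csInf_mem (s := {x : ℝ | ∃ a : G.Alloc, G.IsNash f a ∧ x = G.welfare w a})
    ⟨_, a, ha, rfl⟩ (G.finite_welfare w _)

/-! ### Dual feasibility bounds the welfare ratio -/

/-- The smoothness inequality: a dual feasible `(λ, μ)` bounds the welfare of every allocation by
`μ` times that of any equilibrium. -/
lemma welfare_le_of_dual (G : RAGame n) {f w : ℕ → ℝ} (hw0 : w 0 = 0) {lam mu : ℝ}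
    (hlam : 0 ≤ lam) (h : ∀ p ∈ indexSet n, DualConstr f w lam mu p)
    (a o : G.Alloc) (ha : G.IsNash f a) : G.welfare w o ≤ mu * G.welfare w a := by
  classical
  set α : G.R → ℕ := fun r => (univ.filter fun i => r ∈ (a i).val ∧ r ∉ (o i).val).card with hα
  set ξ : G.R → ℕ := fun r => (univ.filter fun i => r ∈ (a i).val ∧ r ∈ (o i).val).card with hξ
  set β : G.R → ℕ := fun r => (univ.filter fun i => r ∉ (a i).val ∧ r ∈ (o i).val).card with hβ
  have hca : ∀ r, G.count a r = α r + ξ r := by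
    intro r
    simp only [hα, hξ, count, Finset.card_filter, ← Finset.sum_add_distrib]
    refine Finset.sum_congr rfl fun i _ => ?_
    by_cases h1 : r ∈ (a i).val <;> by_cases h2 : r ∈ (o i).val <;> simp [h1, h2]
  have hco : ∀ r, G.count o r = β r + ξ r := by
    intro r
    simp only [hβ, hξ, count, Finset.card_filter, ← Finset.sum_add_distrib]
    refine Finset.sum_congr rfl fun i _ => ?_
    by_cases h1 : r ∈ (a i).val <;> by_cases h2 : r ∈ (o i).val <;> simp [h1, h2]
  have hle : ∀ r, α r + ξ r + β r ≤ n := by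
    intro r
    refine le_trans ?_ G.m_le
    have : G.m = ∑ _i : Fin G.m, 1 := by simp
    rw [this]
    simp only [hα, hβ, hξ, Finset.card_filter, ← Finset.sum_add_distrib]
    refine Finset.sum_le_sum fun i _ => ?_
    by_cases h1 : r ∈ (a i).val <;> by_cases h2 : r ∈ (o i).val <;> simp [h1, h2]
  have hnash : 0 ≤ ∑ r, G.v r * ((α r : ℝ) * f (α r + ξ r) - (β r : ℝ) * f (α r + ξ r + 1)) := by
    have h0 : 0 ≤ ∑ i, (G.utility f a i - G.utility f (G.deviate a i (o i)) i) :=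
      Finset.sum_nonneg fun i _ => sub_nonneg.2 (ha i (o i))
    refine h0.trans_eq ?_
    simp only [utility_deviate, utility_eq G f a, ← Finset.sum_sub_distrib]
    rw [Finset.sum_comm]
    refine Finset.sum_congr rfl fun r _ => ?_
    have e1 : (α r : ℝ) = ∑ i, if r ∈ (a i).val ∧ r ∉ (o i).val then (1 : ℝ) else 0 := by
      simp [hα]
    have e2 : (β r : ℝ) = ∑ i, if r ∉ (a i).val ∧ r ∈ (o i).val then (1 : ℝ) else 0 := by
      simp [hβ]
    rw [e1, e2, Finset.sum_mul, Finset.sum_mul, ← Finset.sum_sub_distrib, Finset.mul_sum]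
    refine Finset.sum_congr rfl fun i _ => ?_
    have hc := G.count_eq_others a i r
    rw [hca r] at hc
    by_cases h1 : r ∈ (a i).val <;> by_cases h2 : r ∈ (o i).val <;> simp [h1, h2] at hc ⊢
    · left; rw [hc]
    · left; rw [hc]
  have hsum : ∀ r, G.v r * w (G.count o r) - mu * (G.v r * w (G.count a r)) +
      lam * (G.v r * ((α r : ℝ) * f (α r + ξ r) - (β r : ℝ) * f (α r + ξ r + 1))) ≤ 0 := by
    intro r
    rw [hca, hco]
    have hd : w (β r + ξ r) - mu * w (α r + ξ r) +
        lam * ((α r : ℝ) * f (α r + ξ r) - (β r : ℝ) * f (α r + ξ r + 1)) ≤ 0 := by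
      by_cases hz : 1 ≤ α r + ξ r + β r
      · refine h (α r, ξ r, β r) ?_
        have := hle r
        simp only [indexSet, Finset.mem_filter, Finset.mem_product, Finset.mem_range]
        omega
      · have h1 : α r = 0 := by omega
        have h2 : ξ r = 0 := by omega
        have h3 : β r = 0 := by omega
        simp [h1, h2, h3, hw0]
    have := mul_nonpos_of_nonneg_of_nonpos (G.v_nonneg r) hd
    linarith
  have htot := Finset.sum_nonpos fun r (_ : r ∈ univ) => hsum r
  rw [Finset.sum_add_distrib, Finset.sum_sub_distrib, ← Finset.mul_sum, ← Finset.mul_sum,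
    ← G.welfare_eq hw0, ← G.welfare_eq hw0] at htot
  have := mul_nonneg hlam hnash
  linarith

end RAGame

/-! ### The dual program -/

lemma mem_indexSet {n a x b : ℕ} :
    (a, x, b) ∈ indexSet n ↔ 1 ≤ a + x + b ∧ a + x + b ≤ n := by
  simp only [indexSet, Finset.mem_filter, Finset.mem_product, Finset.mem_range]
  omega

lemma mem_indexSetR {n a x b : ℕ} :
    (a, x, b) ∈ indexSetR n ↔
      (1 ≤ a + x + b ∧ a + x + b ≤ n) ∧ (a * x * b = 0 ∨ a + x + b = n) := by
  rw [indexSetR, Finset.mem_filter, mem_indexSet]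

/-- The constraints on `I_R` imply those on `I`: moving along `(a - t, x + t, b - t)` changes the
constraint affinely in `t`, and both ends of the admissible segment lie in `I_R`. -/
lemma dualConstr_of_reduced {n : ℕ} {f w : ℕ → ℝ} {lam mu : ℝ}
    (h : ∀ p ∈ indexSetR n, DualConstr f w lam mu p) :
    ∀ p ∈ indexSet n, DualConstr f w lam mu p := by
  rintro ⟨a, x, b⟩ hp
  rw [mem_indexSet] at hp
  rcases le_total 0 (lam * (f (a + x + 1) - f (a + x))) with hs | hs
  · -- the constraint increases with `x`: move up until `a` or `b` vanishes
    obtain ⟨t, a', b', rfl, rfl, h0⟩ : ∃ t a' b', a = a' + t ∧ b = b' + t ∧ (a' = 0 ∨ b' = 0) :=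
      ⟨min a b, a - min a b, b - min a b, by omega, by omega, by omega⟩
    have hm := h (a', x + t, b') (by
      rw [mem_indexSetR]
      refine ⟨by omega, Or.inl ?_⟩
      rcases h0 with h0 | h0 <;> simp [h0])
    simp only [DualConstr] at hm ⊢
    rw [show b' + (x + t) = b' + t + x by ring, show a' + (x + t) = a' + t + x by ring] at hm
    push_cast
    nlinarith [mul_nonneg hs (Nat.cast_nonneg (α := ℝ) t)]
  · -- the constraint decreases with `x`: move down until `x = 0` or `a + x + b = n`
    obtain ⟨t, x', rfl, hle, h0⟩ : ∃ t x', x = x' + t ∧ a + x + b + t ≤ n ∧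
        (x' = 0 ∨ a + x + b + t = n) :=
      ⟨min x (n - (a + x + b)), x - min x (n - (a + x + b)), by omega, by omega, by omega⟩
    have hm := h (a + t, x', b + t) (by
      rw [mem_indexSetR]
      refine ⟨by omega, ?_⟩
      rcases h0 with h0 | h0
      · simp [h0]
      · right; omega)
    simp only [DualConstr] at hm ⊢
    rw [show b + t + x' = b + (x' + t) by ring, show a + t + x' = a + (x' + t) by ring] at hm
    push_cast at hm
    nlinarith [mul_nonneg (neg_nonneg.2 hs) (Nat.cast_nonneg (α := ℝ) t)]

/-- One-dimensional Helly: if no `λ ≥ 0` satisfies all of `c p + λ d p ≤ 0`, then a nonnegative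
combination of at most two of these inequalities has positive constant term and nonnegative slope. -/
lemma exists_two_violated {ι : Type*} (s : Finset ι) (hs : s.Nonempty) (c d : ι → ℝ)
    (h : ¬ ∃ lam : ℝ, 0 ≤ lam ∧ ∀ p ∈ s, c p + lam * d p ≤ 0) :
    ∃ p ∈ s, ∃ q ∈ s, ∃ s t : ℝ, 0 ≤ s ∧ 0 ≤ t ∧
      0 < s * c p + t * c q ∧ 0 ≤ s * d p + t * d q := by
  classical
  by_contra hcon
  push Not at hcon
  have h1 : ∀ p ∈ s, 0 ≤ d p → c p ≤ 0 := by
    intro p hp hd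
    by_contra hc
    have := hcon p hp p hp 1 0 zero_le_one le_rfl (by linarith)
    linarith
  have h2 : ∀ p ∈ s, ∀ q ∈ s, d p < 0 → 0 < d q → d q * c p + (-d p) * c q ≤ 0 := by
    intro p hp q hq hdp hdq
    by_contra hc
    have := hcon p hp q hq (d q) (-d p) hdq.le (by linarith) (by linarith)
    linarith
  apply h
  -- `λ` is the largest of the lower bounds, with `0` among them
  let lb : ι → ℝ := fun p => if d p < 0 then max 0 (c p / (-d p)) else 0
  obtain ⟨m, hm, hmax⟩ := s.exists_max_image lb hs
  refine ⟨lb m, ?_, fun p hp => ?_⟩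
  · simp only [lb]; split_ifs
    · exact le_max_left _ _
    · exact le_rfl
  · rcases lt_trichotomy (d p) 0 with hd | hd | hd
    · have h3 : c p / (-d p) ≤ lb m := by
        refine le_trans ?_ (hmax p hp)
        simp only [lb, if_pos hd]
        exact le_max_right _ _
      rw [div_le_iff₀ (by linarith)] at h3
      linarith
    · have := h1 p hp hd.ge
      rw [hd]; linarith
    · have hc := h1 p hp hd.le
      simp only [lb]
      split_ifs with hdm
      · rcases max_choice 0 (c m / (-d m)) with he | he <;> rw [he]
        · linarith
        · have := h2 m hm p hp hdm hd
          have hdm' : 0 < -d m := by linarith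
          have h4 : c p + c m / (-d m) * d p = (d p * c m + (-d m) * c p) / (-d m) := by
            rw [add_div, mul_div_cancel_left₀ _ hdm'.ne']
            ring
          rw [h4]
          exact div_nonpos_of_nonpos_of_nonneg this hdm'.le
      · linarith

/-- The dual program attains its minimum, which is at least `1`. -/
lemma exists_dual_min {n : ℕ} {w f : ℕ → ℝ} (hn : 1 ≤ n)
    (hw : ∀ j, 1 ≤ j → j ≤ n → 0 < w j) (hw0 : w 0 = 0) (hf1 : 0 < f 1) :
    ∃ M : ℝ, 1 ≤ M ∧
      IsLeast {mu : ℝ | ∃ lam : ℝ, 0 ≤ lam ∧ ∀ p ∈ indexSetR n, DualConstr f w lam mu p} M := by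
  have hw1 : 0 < w 1 := hw 1 le_rfl hn
  have hge : ∀ lam mu : ℝ, (∀ p ∈ indexSetR n, DualConstr f w lam mu p) → 1 ≤ mu := by
    intro lam mu h
    have := h (0, 1, 0) (by rw [mem_indexSetR]; omega)
    simp only [DualConstr, Nat.cast_zero, zero_mul, sub_zero, mul_zero, add_zero, zero_add] at this
    nlinarith
  have hlam : ∀ lam mu : ℝ, (∀ p ∈ indexSetR n, DualConstr f w lam mu p) →
      lam ≤ mu * w 1 / f 1 := by
    intro lam mu h
    have := h (1, 0, 0) (by rw [mem_indexSetR]; omega)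
    simp only [DualConstr, Nat.cast_zero, Nat.cast_one, zero_mul, one_mul, sub_zero, add_zero,
      hw0] at this
    rw [le_div_iff₀ hf1]
    linarith
  -- a feasible pair: `λ` handles the indices `(0,0,b)`, then `μ` handles those with `a + x > 0`
  obtain ⟨lam₀, mu₀, hlam₀, hfeas⟩ : ∃ lam mu : ℝ, 0 ≤ lam ∧
      ∀ p ∈ indexSetR n, DualConstr f w lam mu p := by
    obtain ⟨B, hB⟩ := ((range (n + 1)).image w).bddAbove
    have hB' : ∀ j ≤ n, w j ≤ B := fun j hj =>
      hB (by simpa using ⟨j, hj, rfl⟩)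
    have hB0 : 0 ≤ B := hw0 ▸ hB' 0 (Nat.zero_le n)
    set lam := B / f 1 with hl
    have hl0 : 0 ≤ lam := div_nonneg hB0 hf1.le
    obtain ⟨C, hC⟩ := ((indexSetR n).image fun p => (w (p.2.2 + p.2.1) +
      lam * ((p.1 : ℝ) * f (p.1 + p.2.1) - (p.2.2 : ℝ) * f (p.1 + p.2.1 + 1))) /
        w (p.1 + p.2.1)).bddAbove
    refine ⟨lam, C, hl0, ?_⟩
    rintro ⟨a, x, b⟩ hp
    have hp' := hp
    rw [mem_indexSetR] at hp'
    rcases Nat.eq_zero_or_pos (a + x) with h0 | h0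
    · obtain ⟨rfl, rfl⟩ : a = 0 ∧ x = 0 := by omega
      have hb : (1 : ℝ) ≤ b := by
        have : 1 ≤ b := by omega
        exact_mod_cast this
      have hwb := hB' b (by omega)
      have e : lam * f 1 = B := by rw [hl]; field_simp
      simp only [DualConstr, Nat.cast_zero, zero_mul, add_zero, zero_add, hw0, mul_zero]
      nlinarith
    · have hpos := hw (a + x) h0 (by omega)
      have hc : (w (b + x) + lam * ((a : ℝ) * f (a + x) - (b : ℝ) * f (a + x + 1))) /
          w (a + x) ≤ C := hC (Finset.mem_coe.2 (Finset.mem_image.2 ⟨(a, x, b), hp, rfl⟩))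
      rw [div_le_iff₀ hpos] at hc
      simp only [DualConstr]
      linarith
  let K : Set (ℝ × ℝ) :=
    {z | 0 ≤ z.1 ∧ z.2 ≤ mu₀ ∧ ∀ p ∈ indexSetR n, DualConstr f w z.1 z.2 p}
  have hKclosed : IsClosed K := by
    refine (isClosed_le continuous_const continuous_fst).inter
      ((isClosed_le continuous_snd continuous_const).inter ?_)
    have : {z : ℝ × ℝ | ∀ p ∈ indexSetR n, DualConstr f w z.1 z.2 p} =
        ⋂ p ∈ indexSetR n, {z : ℝ × ℝ | DualConstr f w z.1 z.2 p} := by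
      ext z; simp
    change IsClosed {z : ℝ × ℝ | ∀ p ∈ indexSetR n, DualConstr f w z.1 z.2 p}
    rw [this]
    refine isClosed_iInter fun p => isClosed_iInter fun _ => ?_
    unfold DualConstr
    exact isClosed_le (by fun_prop) continuous_const
  have hKsub : K ⊆ Set.Icc ((0 : ℝ), (1 : ℝ)) (mu₀ * w 1 / f 1, mu₀) := by
    rintro ⟨l, m⟩ ⟨h1, h2, h3⟩
    refine ⟨⟨h1, hge l m h3⟩, ⟨(hlam l m h3).trans ?_, h2⟩⟩
    simp only at h2 ⊢
    gcongr
  have hKc : IsCompact K := isCompact_Icc.of_isClosed_subset hKclosed hKsub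
  obtain ⟨⟨l, m⟩, hz, hmin⟩ :=
    hKc.exists_isMinOn ⟨(lam₀, mu₀), hlam₀, le_rfl, hfeas⟩ continuous_snd.continuousOn
  refine ⟨m, hge l m hz.2.2, ⟨l, hz.1, hz.2.2⟩, ?_⟩
  rintro mu ⟨lam, h1, h2⟩
  rcases le_total mu mu₀ with h3 | h3
  · exact hmin (show (lam, mu) ∈ K from ⟨h1, h3, h2⟩)
  · exact hz.2.1.trans h3

/-! ### Cyclic games -/

lemma card_offset {n : ℕ} (lo hi : ℕ) (hhi : hi ≤ n) :
    (univ.filter fun j : Fin n => lo ≤ j.val ∧ j.val < hi).card = hi - lo := by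
  rw [← Nat.card_Ico lo hi, ← Finset.card_map Fin.valEmbedding]
  congr 1
  ext j
  simp only [Finset.mem_map, Finset.mem_filter, Finset.mem_univ, true_and, Fin.valEmbedding_apply,
    Finset.mem_Ico]
  constructor
  · rintro ⟨k, hk, rfl⟩; exact hk
  · intro hj; exact ⟨⟨j, by omega⟩, hj, rfl⟩

/-- The utility an agent loses on one resource at cyclic offset `k` by moving from the arc `[0, a + x)`
to the arc `[a, a + x + b)`: only `[0, a)` and `[a + x, a + x + b)` contribute. -/
lemma deviation_loss {P Q : Prop} {_ : Decidable P} {_ : Decidable Q} {k a x b o : ℕ} (v : ℝ) (f : ℕ → ℝ)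
    (m1 : P ↔ k < a + x) (m2 : Q ↔ a ≤ k ∧ k < a + x + b)
    (hc : a + x = o + if P then 1 else 0) :
    (if P then v * f (o + 1) else 0) - (if Q then v * f (o + 1) else 0) =
      v * f (a + x) * (if 0 ≤ k ∧ k < a then 1 else 0) -
        v * f (a + x + 1) * (if a + x ≤ k ∧ k < a + x + b then 1 else 0) := by
  simp only [m1, m2] at hc ⊢
  by_cases h1 : k < a
  · have h2 : k < a + x := by omega
    rw [if_pos h2] at hc
    rw [if_pos h2, if_neg (by omega), if_pos (by omega), if_neg (by omega), hc]
    ring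
  · by_cases h2 : k < a + x
    · rw [if_pos h2, if_pos (by omega), if_neg (by omega), if_neg (by omega)]
      ring
    · rw [if_neg h2] at hc
      by_cases h3 : k < a + x + b
      · rw [if_neg h2, if_pos (by omega), if_neg (by omega), if_pos (by omega), hc]
        ring
      · rw [if_neg h2, if_neg (by omega), if_neg (by omega), if_neg (by omega)]
        ring

section Cyclic

variable {n : ℕ} {ι : Type} [Fintype ι]

/-- The arc of resources `(t, k)` whose cyclic offset `k - i` lies in `[lo t, hi t)`. -/
def arc (lo hi : ι → ℕ) (i : Fin n) : Finset (ι × Fin n) :=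
  univ.filter fun r => lo r.1 ≤ (r.2 - i).val ∧ (r.2 - i).val < hi r.1

lemma mem_arc {lo hi : ι → ℕ} {i : Fin n} {r : ι × Fin n} :
    r ∈ arc lo hi i ↔ lo r.1 ≤ (r.2 - i).val ∧ (r.2 - i).val < hi r.1 := by
  simp [arc]

variable [NeZero n] [DecidableEq ι]

lemma card_agents (lo hi : ι → ℕ) (r : ι × Fin n) (hhi : hi r.1 ≤ n) :
    (univ.filter fun i : Fin n => r ∈ arc lo hi i).card = hi r.1 - lo r.1 := by
  rw [← card_offset (n := n) (lo r.1) (hi r.1) hhi]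
  refine Finset.card_equiv (Equiv.subLeft r.2) fun i => ?_
  simp [mem_arc]

lemma card_resources (lo hi : ℕ) (i : Fin n) (hhi : hi ≤ n) :
    (univ.filter fun k : Fin n => lo ≤ (k - i).val ∧ (k - i).val < hi).card = hi - lo := by
  rw [← card_offset (n := n) lo hi hhi]
  refine Finset.card_equiv (Equiv.subRight i) fun k => ?_
  simp

/-- The cyclic game with `n` agents: for each type `t` a circle of `n` resources of value `θ t`;
agent `i` chooses between the arcs at offsets `[0, a + x)` and `[a, a + x + b)`, which overlap in
`x` resources of each type. -/
def cyclicGame (n : ℕ) [NeZero n] (a x b : ι → ℕ) (θ : ι → ℝ) (hθ : ∀ t, 0 ≤ θ t) : RAGame n where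
  R := ι × Fin n
  v := fun r => θ r.1
  v_nonneg := fun r => hθ r.1
  m := n
  m_le := le_rfl
  A := fun i => {arc 0 (a + x) i, arc a (a + x + b) i}
  A_ne := fun _ => ⟨_, Finset.mem_insert_self _ _⟩

variable (a x b : ι → ℕ) (θ : ι → ℝ) (hθ : ∀ t, 0 ≤ θ t)

/-- The allocation in which every agent uses the arc `[0, a + x)`. -/
def cyclicNash : (cyclicGame n a x b θ hθ).Alloc :=
  fun i => ⟨arc (n := n) 0 (a + x) i, Finset.mem_insert_self _ _⟩

/-- The allocation in which every agent uses the arc `[a, a + x + b)`. -/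
def cyclicOpt : (cyclicGame n a x b θ hθ).Alloc :=
  fun i => ⟨arc (n := n) a (a + x + b) i, Finset.mem_insert_of_mem (Finset.mem_singleton_self _)⟩

lemma count_cyclicNash (hle : ∀ t, a t + x t + b t ≤ n) (r : ι × Fin n) :
    (cyclicGame n a x b θ hθ).count (cyclicNash a x b θ hθ) r = a r.1 + x r.1 := by
  have := hle r.1
  have h := card_agents (n := n) 0 (a + x) r (by simp only [Pi.add_apply]; omega)
  simp only [Pi.add_apply, Pi.zero_apply, Nat.sub_zero] at h
  exact h

lemma count_cyclicOpt (hle : ∀ t, a t + x t + b t ≤ n) (r : ι × Fin n) :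
    (cyclicGame n a x b θ hθ).count (cyclicOpt a x b θ hθ) r = b r.1 + x r.1 := by
  have := hle r.1
  have h := card_agents (n := n) a (a + x + b) r (by simp only [Pi.add_apply]; omega)
  have e : (a + x + b) r.1 - a r.1 = b r.1 + x r.1 := by simp only [Pi.add_apply]; omega
  exact h.trans e

lemma welfare_cyclicNash {w : ℕ → ℝ} (hw0 : w 0 = 0) (hle : ∀ t, a t + x t + b t ≤ n) :
    (cyclicGame n a x b θ hθ).welfare w (cyclicNash a x b θ hθ) =
      n * ∑ t, θ t * w (a t + x t) := by
  rw [RAGame.welfare_eq _ hw0]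
  refine (Finset.sum_congr rfl fun r _ => by rw [count_cyclicNash a x b θ hθ hle r]).trans ?_
  refine (Fintype.sum_prod_type (fun r : ι × Fin n => θ r.1 * w (a r.1 + x r.1))).trans ?_
  simp [Finset.mul_sum]

lemma welfare_cyclicOpt {w : ℕ → ℝ} (hw0 : w 0 = 0) (hle : ∀ t, a t + x t + b t ≤ n) :
    (cyclicGame n a x b θ hθ).welfare w (cyclicOpt a x b θ hθ) =
      n * ∑ t, θ t * w (b t + x t) := by
  rw [RAGame.welfare_eq _ hw0]
  refine (Finset.sum_congr rfl fun r _ => by rw [count_cyclicOpt a x b θ hθ hle r]).trans ?_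
  refine (Fintype.sum_prod_type (fun r : ι × Fin n => θ r.1 * w (b r.1 + x r.1))).trans ?_
  simp [Finset.mul_sum]

/-- Deviating from the first arc to the second loses `Σ θ (a f(a+x) - b f(a+x+1))`. -/
lemma isNash_cyclic {f : ℕ → ℝ} (hle : ∀ t, a t + x t + b t ≤ n)
    (hd : 0 ≤ ∑ t, θ t * ((a t : ℝ) * f (a t + x t) - (b t : ℝ) * f (a t + x t + 1))) :
    (cyclicGame n a x b θ hθ).IsNash f (cyclicNash a x b θ hθ) := by
  let F : Fin n → ι × Fin n → ℝ := fun i r =>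
    θ r.1 * f (a r.1 + x r.1) * (if 0 ≤ (r.2 - i).val ∧ (r.2 - i).val < a r.1 then 1 else 0) -
      θ r.1 * f (a r.1 + x r.1 + 1) *
        (if a r.1 + x r.1 ≤ (r.2 - i).val ∧ (r.2 - i).val < a r.1 + x r.1 + b r.1 then 1 else 0)
  have hF : ∀ i, 0 ≤ ∑ r, F i r := by
    intro i
    refine hd.trans_eq (Eq.symm ?_)
    refine (Fintype.sum_prod_type _).trans ?_
    refine Finset.sum_congr rfl fun t _ => ?_
    have := hle t
    simp only [F]
    rw [Finset.sum_sub_distrib, ← Finset.mul_sum, ← Finset.mul_sum, Finset.sum_boole,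
      Finset.sum_boole, card_resources _ _ i (by omega), card_resources _ _ i (by omega)]
    simp only [Nat.sub_zero, Nat.add_sub_cancel_left]
    ring
  rw [RAGame.isNash_iff]
  intro i s
  have hs : s.val = arc (n := n) 0 (a + x) i ∨ s.val = arc (n := n) a (a + x + b) i :=
    (Finset.mem_insert.1 s.2).imp id fun h => Finset.mem_singleton.1 h
  rcases hs with hs | hs
  · have : s = cyclicNash a x b θ hθ i := Subtype.ext hs
    rw [this, RAGame.deviate_self]
  rw [RAGame.utility_deviate, RAGame.utility_eq, ← sub_nonneg, ← Finset.sum_sub_distrib]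
  refine (hF i).trans_eq (Finset.sum_congr rfl fun r _ => Eq.symm ?_)
  refine deviation_loss (k := (@HSub.hSub (Fin n) (Fin n) (Fin n) _ r.2 i).val) (θ r.1) f ?_ ?_
    ((count_cyclicNash a x b θ hθ hle r).symm.trans (RAGame.count_eq_others _ _ i r))
  · refine (mem_arc (n := n)).trans ?_
    simp
  · rw [hs]
    exact mem_arc (n := n)

end Cyclic

/-- If `μ` is not dual feasible, some game has an equilibrium `e` and an allocation `o` with
`μ W(e) < W(o)`. -/
lemma exists_bad_game {n : ℕ} {w f : ℕ → ℝ} (hn : 1 ≤ n) (hw0 : w 0 = 0) {mu : ℝ}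
    (h : ¬ ∃ lam : ℝ, 0 ≤ lam ∧ ∀ p ∈ indexSetR n, DualConstr f w lam mu p) :
    ∃ (G : RAGame n) (e o : G.Alloc), G.IsNash f e ∧
      mu * G.welfare w e < G.welfare w o := by
  have : NeZero n := ⟨by omega⟩
  obtain ⟨⟨a, x, b⟩, hp, ⟨a', x', b'⟩, hq, s, t, hs, ht, hc, hd⟩ :=
    exists_two_violated (indexSetR n) ⟨(0, 1, 0), by rw [mem_indexSetR]; omega⟩
      (fun p => w (p.2.2 + p.2.1) - mu * w (p.1 + p.2.1))
      (fun p => (p.1 : ℝ) * f (p.1 + p.2.1) - (p.2.2 : ℝ) * f (p.1 + p.2.1 + 1)) h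
  rw [mem_indexSetR] at hp hq
  let α : Bool → ℕ := fun c => cond c a a'
  let ξ : Bool → ℕ := fun c => cond c x x'
  let β : Bool → ℕ := fun c => cond c b b'
  let θ : Bool → ℝ := fun c => cond c s t
  have hθ : ∀ c, 0 ≤ θ c := by rintro (_ | _) <;> assumption
  have hle : ∀ c, α c + ξ c + β c ≤ n := by
    rintro (_ | _)
    · exact hq.1.2
    · exact hp.1.2
  refine ⟨cyclicGame n α ξ β θ hθ, cyclicNash α ξ β θ hθ, cyclicOpt α ξ β θ hθ,
    isNash_cyclic α ξ β θ hθ hle ?_, ?_⟩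
  · simpa [α, ξ, β, θ] using hd
  · rw [welfare_cyclicNash _ _ _ _ _ hw0 hle, welfare_cyclicOpt _ _ _ _ _ hw0 hle]
    have hn' : (0 : ℝ) < n := by exact_mod_cast hn
    simp only [Fintype.sum_bool, α, ξ, β, θ, cond_true, cond_false]
    nlinarith [mul_pos hn' hc]

/-- Theorem 3(ii): the dual reformulation. With `f(1) > 0`, the price of anarchy
equals `1/W*`, where `W*` is the minimum of `μ` over pairs `(λ,μ)` with `λ ≥ 0`
satisfying `w(b+x) − μ w(a+x) + λ[a f(a+x) − b f(a+x+1)] ≤ 0` for all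
`(a,x,b) ∈ I_R`; moreover the minimum is attained (and hence finite). -/
theorem poa_dual_lp (n : ℕ) (w f : ℕ → ℝ) (hn : 1 ≤ n)
    (hw : ∀ j, 1 ≤ j → j ≤ n → 0 < w j)
    (hw0 : w 0 = 0) (hwn1 : w (n + 1) = 0)
    (hf0 : f 0 = 0) (hfn1 : f (n + 1) = 0)
    (hf1 : 0 < f 1) :
    (∃ lam : ℝ, 0 ≤ lam ∧ ∀ p ∈ indexSetR n,
        DualConstr f w lam
          (sInf { mu : ℝ | ∃ lam' : ℝ, 0 ≤ lam' ∧ ∀ p' ∈ indexSetR n, DualConstr f w lam' mu p' }) p) ∧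
    PoA f w n =
      1 / sInf { mu : ℝ | ∃ lam : ℝ, 0 ≤ lam ∧ ∀ p ∈ indexSetR n, DualConstr f w lam mu p } := by
  obtain ⟨M, hM1, hM⟩ := exists_dual_min (f := f) hn hw hw0 hf1
  rw [hM.csInf_eq]
  refine ⟨hM.1, ?_⟩
  have hM0 : 0 < M := by linarith
  obtain ⟨lam, hlam, hfeas⟩ := hM.1
  have hfull := dualConstr_of_reduced hfeas
  have hlow : ∀ y ∈ { y : ℝ | ∃ G : RAGame n, 0 < G.optVal w ∧
      y = G.worstNash f w / G.optVal w }, 1 / M ≤ y := by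
    rintro y ⟨G, hG, rfl⟩
    obtain ⟨o, ho⟩ := G.exists_optVal w
    obtain ⟨e, he, hWe⟩ := G.exists_worstNash f w
    have := G.welfare_le_of_dual hw0 hlam hfull e o he
    rw [div_le_div_iff₀ hM0 hG, hWe, ho]
    linarith
  have hup : ∀ mu, 0 < mu → mu < M → ∃ y ∈ { y : ℝ | ∃ G : RAGame n, 0 < G.optVal w ∧
      y = G.worstNash f w / G.optVal w }, y < 1 / mu := by
    intro mu hmu hlt
    obtain ⟨G, e, o, he, hlt'⟩ :=
      exists_bad_game (f := f) (w := w) hn hw0 (mu := mu) fun hcon =>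
        absurd (hM.2 hcon) (not_le.2 hlt)
    have h1 := G.welfare_le_optVal w o
    have h2 := G.worstNash_le f w e he
    have h3 := mul_nonneg hmu.le (G.welfare_nonneg hw e)
    have hpos : 0 < G.optVal w := by linarith
    refine ⟨_, ⟨G, hpos, rfl⟩, ?_⟩
    rw [div_lt_div_iff₀ hpos hmu]
    nlinarith
  obtain ⟨y₀, hy₀, -⟩ := hup (M / 2) (by linarith) (by linarith)
  refine le_antisymm ?_ (le_csInf ⟨y₀, hy₀⟩ hlow)
  refine le_of_forall_gt fun z hz => ?_
  have hz0 : 0 < z := lt_trans (by positivity) hz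
  -- `μ = 1 / z` lies strictly below `M`
  obtain ⟨y, hy, hyz⟩ := hup (1 / z) (by positivity) (by
    rw [div_lt_iff₀ hM0] at hz
    rw [div_lt_iff₀ hz0]
    linarith)
  rw [one_div_one_div] at hyz
  exact lt_of_le_of_lt (csInf_le ⟨_, hlow⟩ hy) hyz
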